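/- arXiv:2301.04728 — 9 statements merged into one kernel-verified Lean document; each statement's English description precedes it below -/
import Mathlib

section
/- Let L be a frame with a family B : I → L such that for every U : L there exists J : Set I with U = ⨆ j ∈ J, B j, the set {B j | j ∈ J} directed, and B j well inside U for every j ∈ J (regularity with directed basic covering families). Then for all U, V : L, U ≪ V implies U is well inside V. -/
/-!
Regularity writes `V` as a directed supremum of basic elements well inside `V`. If `U ≪ V`, then
`U` lies below one of them, and anything below an element well inside `V` is itself well inside
`V`. The covering family may be empty, while `≪` only speaks of nonempty directed sets, so that
case is separate.
-/

universe u v w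

def WayBelow {L : Type*} [Order.Frame L] (U V : L) : Prop :=
  ∀ D : Set L, D.Nonempty → DirectedOn (· ≤ ·) D → V ≤ sSup D → ∃ d ∈ D, U ≤ d

def WellInside {L : Type*} [Order.Frame L] (U V : L) : Prop :=
  ∃ W : L, U ⊓ W = ⊥ ∧ V ⊔ W = ⊤

def IsBasis {I L : Type*} [Order.Frame L] (B : I → L) : Prop :=
  ∀ U : L, ∃ J : Set I, U = ⨆ j ∈ J, B j

def IsNucleus {L : Type*} [Order.Frame L] (j : L → L) : Prop :=
  (∀ U, U ≤ j U) ∧ (∀ U, j (j U) = j U) ∧ (∀ U V, j (U ⊓ V) = j U ⊓ j V)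

def IsSpectral (L : Type u) [Order.Frame L] : Prop :=
  ∃ (I : Type u) (B : I → L),
    IsBasis B ∧ (∀ i, WayBelow (B i) (B i)) ∧
    ((∃ t, B t = ⊤) ∧ ∀ i j, ∃ k, B k = B i ⊓ B j) ∧
    ((∃ b, B b = ⊥) ∧ ∀ i j, ∃ k, B k = B i ⊔ B j)

def iterComp {I L : Type*} (K : I → L → L) : List I → L → L
  | [] => id
  | i :: s => iterComp K s ∘ K i

theorem wayBelow_implies_wellInside {I : Type*} {L : Type*} [Order.Frame L] (B : I → L)
    (hreg : ∀ U : L, ∃ J : Set I,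
      U = (⨆ j ∈ J, B j) ∧ DirectedOn (· ≤ ·) (B '' J) ∧ ∀ j ∈ J, WellInside (B j) U)
    (U V : L) (h : WayBelow U V) : WellInside U V := by
  obtain ⟨J, hV, hdir, hwell⟩ := hreg V
  rcases J.eq_empty_or_nonempty with rfl | hne
  -- An empty covering family forces `V = ⊥`, hence `U = ⊥`, and `⊤` witnesses the claim.
  · have hV' : V = ⊥ := by simpa using hV
    obtain ⟨d, hd, hUd⟩ := h {⊥} (Set.singleton_nonempty _)
      (directedOn_singleton _) (by simp [hV'])
    rw [Set.mem_singleton_iff.mp hd] at hUd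
    exact ⟨⊤, by simpa using hUd, by simp⟩
  · obtain ⟨d, ⟨j, hj, rfl⟩, hUj⟩ := h (B '' J) (hne.image B) hdir
      (by rw [sSup_image]; exact hV.le)
    -- Any complement witness for `B j` also works for the smaller element `U`.
    obtain ⟨W, hW, hVW⟩ := hwell j hj
    exact ⟨W, le_bot_iff.mp ((inf_le_inf_right W hUj).trans hW.le), hVW⟩
end

section
/- Let L be a frame whose top element ⊤ is compact and which has a basis B : I → L of clopen elements that is closed under finite joins (a Stone frame). Then an element U : L is compact if and only if it is clopen. -/
/-!
A compact element is the directed supremum of the basic elements below it (directed because the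
basis is closed under finite joins), hence is itself basic and so clopen. Conversely, if `U` has
complement `W` and `D` is a directed cover of `U`, then the elements `d ⊔ W` form a directed cover
of the compact top element, so `d ⊔ W = ⊤` for some `d ∈ D`, and `U ⊓ W = ⊥` forces `U ≤ d`.
-/

universe u v w

theorem stone_compact_iff_clopen {I : Type*} {L : Type*} [Order.Frame L]
    (htop : WayBelow (⊤ : L) ⊤)
    (B : I → L) (hbasis : IsBasis B)
    (hclopen : ∀ i, WellInside (B i) (B i))
    (hbot : ∃ b, B b = ⊥)
    (hjoin : ∀ i j, ∃ k, B k = B i ⊔ B j)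
    (U : L) : WayBelow U U ↔ WellInside U U := by
  constructor
  · intro hU
    obtain ⟨b, hb⟩ := hbot
    obtain ⟨J, hJ⟩ := hbasis U
    -- `U` is the directed supremum of the basic elements below it, so by compactness it is basic.
    obtain ⟨d, ⟨⟨i, rfl⟩, hiU⟩, hUi⟩ := hU {x | x ∈ Set.range B ∧ x ≤ U}
      ⟨⊥, ⟨b, hb⟩, bot_le⟩
      (by
        rintro _ ⟨⟨i, rfl⟩, hi⟩ _ ⟨⟨j, rfl⟩, hj⟩
        obtain ⟨k, hk⟩ := hjoin i j
        exact ⟨B k, ⟨⟨k, rfl⟩, hk ▸ sup_le hi hj⟩, hk ▸ le_sup_left, hk ▸ le_sup_right⟩)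
      (by
        have hle : ∀ j ∈ J, B j ≤ U := fun j hj => by
          rw [hJ]
          exact le_iSup₂_of_le j hj le_rfl
        exact hJ.le.trans (iSup₂_le fun j hj => le_sSup ⟨⟨j, rfl⟩, hle j hj⟩))
    rw [le_antisymm hUi hiU]
    exact hclopen i
  · rintro ⟨W, hUW, hUW'⟩ D ⟨d₀, hd₀⟩ hdir hle
    -- Joining a directed cover of `U` with the complement `W` gives a directed cover of `⊤`.
    obtain ⟨_, ⟨d, hd, rfl⟩, htd⟩ := htop ((· ⊔ W) '' D) ⟨_, d₀, hd₀, rfl⟩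
      (by
        rintro _ ⟨x, hx, rfl⟩ _ ⟨y, hy, rfl⟩
        obtain ⟨z, hz, hxz, hyz⟩ := hdir x hx y hy
        exact ⟨_, ⟨z, hz, rfl⟩, sup_le_sup_right hxz W, sup_le_sup_right hyz W⟩)
      (by
        rw [← hUW']
        refine sup_le (hle.trans (sSup_le fun d hd => ?_)) ?_
        · exact le_sup_left.trans (le_sSup (Set.mem_image_of_mem (· ⊔ W) hd))
        · exact le_sup_right.trans (le_sSup (Set.mem_image_of_mem (· ⊔ W) hd₀)))
    exact ⟨d, hd, Disjoint.left_le_of_le_sup_right (le_top.trans htd) (disjoint_iff.2 hUW)⟩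
end

section
/- Let M and N be spectral frames, let h : M → N be a frame homomorphism, and let g : N → M be a right adjoint of h (GaloisConnection h g). Then g is Scott continuous if and only if h maps compact elements of M to compact elements of N. -/
/-!
The right adjoint `g` is monotone, so only the inequality `g (sSup D) ≤ sSup (g '' D)` matters.
If `g` preserves directed suprema and `C` is compact, then `h C ≤ sSup D` transposes to
`C ≤ sSup (g '' D)`; compactness gives `C ≤ g d` for some `d ∈ D`, that is, `h C ≤ d`.
Conversely, `g (sSup D)` is a supremum of compact basic elements `C`; each satisfies
`h C ≤ sSup D`, so compactness of `h C` gives `h C ≤ d` and hence `C ≤ g d` for some `d ∈ D`.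
-/

universe u v w

theorem perfect_iff_spectral {M : Type u} {N : Type u} [Order.Frame M] [Order.Frame N]
    (hM : IsSpectral M) (hN : IsSpectral N)
    (h : M → N)
    (htop : h ⊤ = ⊤)
    (hinf : ∀ a b : M, h (a ⊓ b) = h a ⊓ h b)
    (hsup : ∀ S : Set M, h (sSup S) = sSup (h '' S))
    (g : N → M) (hadj : GaloisConnection h g) :
    ScottContinuous g ↔ ∀ C : M, WayBelow C C → WayBelow (h C) (h C) := by
  constructor
  · intro hg C hC D hne hdir hle
    have hlub : sSup (g '' D) = g (sSup D) := (hg hne hdir (isLUB_sSup D)).sSup_eq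
    have hdir' : DirectedOn (· ≤ ·) (g '' D) := by
      rintro _ ⟨a, ha, rfl⟩ _ ⟨b, hb, rfl⟩
      obtain ⟨c, hc, hac, hbc⟩ := hdir a ha b hb
      exact ⟨g c, ⟨c, hc, rfl⟩, hadj.monotone_u hac, hadj.monotone_u hbc⟩
    obtain ⟨_, ⟨d, hd, rfl⟩, hCd⟩ :=
      hC (g '' D) (hne.image g) hdir' (hlub ▸ (hadj _ _).1 hle)
    exact ⟨d, hd, (hadj _ _).2 hCd⟩
  · intro hcomp D hne hdir a ha
    refine ⟨hadj.monotone_u.mem_upperBounds_image ha.1, fun x hx => ?_⟩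
    obtain ⟨I, B, hB, hBc, -, -⟩ := hM
    obtain ⟨J, hJ⟩ := hB (g a)
    rw [hJ]
    refine iSup₂_le fun j hj => ?_
    have hja : B j ≤ g a := hJ ▸ le_iSup₂ (f := fun j (_ : j ∈ J) => B j) j hj
    obtain ⟨d, hd, hjd⟩ :=
      hcomp (B j) (hBc j) D hne hdir (ha.sSup_eq ▸ (hadj _ _).2 hja)
    exact ((hadj _ _).1 hjd).trans (hx ⟨d, hd, rfl⟩)
end

section
/- Let K : I → (L → L) be a family of Scott continuous nuclei on a frame L, and define the iterated composition o : List I → (L → L) by o [] = id and o (i :: s) = o s ∘ K i. Then the map N : L → L defined by N U = ⨆ (s : List I), o s U is a Scott continuous nucleus on L, it satisfies K i ≤ N pointwise for every i : I, and for every Scott continuous nucleus j on L with K i ≤ j pointwise for all i : I one has N ≤ j pointwise; that is, N is the join of the family K among Scott continuous nuclei. -/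
/-!
Every iterate `iterComp K s` is Scott continuous, inflationary and preserves binary meets, and
concatenating words composes iterates. Hence for fixed `U` the elements `iterComp K s U` form a
directed family: the word `s ++ t` bounds both `s` and `t`.

Directedness gives everything nontrivial. By Scott continuity, each iterate commutes with the
supremum `⨆ t, iterComp K t U`, producing only values `iterComp K (t ++ s) U`; so the supremum `N`
is idempotent. By frame distributivity, `N U ⊓ N V` is the supremum of
`iterComp K s U ⊓ iterComp K t V`, each of which lies below `iterComp K (s ++ t) (U ⊓ V)`.
Scott continuity of `N` is an interchange of suprema, and a nucleus above every `K i` is above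
every iterate, by induction on the word and idempotence.
-/

universe u v w

section IterComp

variable {I L : Type*} [Order.Frame L] {K : I → L → L}

theorem iterComp_append (s t : List I) (U : L) :
    iterComp K (s ++ t) U = iterComp K t (iterComp K s U) := by
  induction s generalizing U with
  | nil => rfl
  | cons i s ih => exact ih (K i U)

theorem le_iterComp (hK : ∀ i, IsNucleus (K i)) (s : List I) (U : L) :
    U ≤ iterComp K s U := by
  induction s generalizing U with
  | nil => exact le_rfl
  | cons i s ih => exact ((hK i).1 U).trans (ih (K i U))

theorem iterComp_inf (hK : ∀ i, IsNucleus (K i)) (s : List I) (U V : L) :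
    iterComp K s (U ⊓ V) = iterComp K s U ⊓ iterComp K s V := by
  induction s generalizing U V with
  | nil => rfl
  | cons i s ih =>
    change iterComp K s (K i (U ⊓ V)) = iterComp K s (K i U) ⊓ iterComp K s (K i V)
    rw [(hK i).2.2, ih]

theorem scottContinuous_iterComp (hKs : ∀ i, ScottContinuous (K i)) (s : List I) :
    ScottContinuous (iterComp K s) := by
  induction s with
  | nil => exact ScottContinuous.id
  | cons i s ih => exact (hKs i).comp ih

theorem iterComp_le_append_left (hK : ∀ i, IsNucleus (K i)) (s t : List I) (U : L) :
    iterComp K s U ≤ iterComp K (s ++ t) U := by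
  rw [iterComp_append]
  exact le_iterComp hK t _

theorem iterComp_le_append_right (hK : ∀ i, IsNucleus (K i))
    (hKs : ∀ i, ScottContinuous (K i)) (s t : List I) (U : L) :
    iterComp K t U ≤ iterComp K (s ++ t) U := by
  rw [iterComp_append]
  exact (scottContinuous_iterComp hKs t).monotone (le_iterComp hK s U)

theorem directedOn_range_iterComp (hK : ∀ i, IsNucleus (K i))
    (hKs : ∀ i, ScottContinuous (K i)) (U : L) :
    DirectedOn (· ≤ ·) (Set.range fun s : List I => iterComp K s U) := by
  rintro _ ⟨s, rfl⟩ _ ⟨t, rfl⟩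
  exact ⟨_, ⟨s ++ t, rfl⟩, iterComp_le_append_left hK s t U,
    iterComp_le_append_right hK hKs s t U⟩

end IterComp

theorem scott_nuclei_join {I : Type*} {L : Type*} [Order.Frame L]
    (K : I → L → L)
    (hK : ∀ i, IsNucleus (K i)) (hKs : ∀ i, ScottContinuous (K i)) :
    IsNucleus (fun U => ⨆ s : List I, iterComp K s U) ∧
    ScottContinuous (fun U => ⨆ s : List I, iterComp K s U) ∧
    (∀ i U, K i U ≤ ⨆ s : List I, iterComp K s U) ∧
    (∀ j : L → L, IsNucleus j → ScottContinuous j → (∀ i U, K i U ≤ j U) →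
      ∀ U, (⨆ s : List I, iterComp K s U) ≤ j U) := by
  have le_N : ∀ (s : List I) (U : L), iterComp K s U ≤ ⨆ s : List I, iterComp K s U :=
    fun s U => le_iSup (fun s : List I => iterComp K s U) s
  refine ⟨⟨fun U => le_N [] U, fun U => le_antisymm ?_ (le_N [] _), fun U V => ?_⟩, ?_,
    fun i U => le_N [i] U, fun j hj hjs hKj U => iSup_le fun s => ?_⟩
  · refine iSup_le fun s => ?_
    -- `iterComp K s` commutes with the directed supremum of the iterates at `U`.
    have hlub := scottContinuous_iterComp hKs s (Set.range_nonempty _)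
      (directedOn_range_iterComp hK hKs U) isLUB_iSup
    refine hlub.2 ?_
    rintro _ ⟨_, ⟨t, rfl⟩, rfl⟩
    change iterComp K s (iterComp K t U) ≤ _
    rw [← iterComp_append]
    exact le_N (t ++ s) U
  · change (⨆ s : List I, iterComp K s (U ⊓ V)) =
      (⨆ s : List I, iterComp K s U) ⊓ ⨆ s : List I, iterComp K s V
    apply le_antisymm
    · refine iSup_le fun s => ?_
      rw [iterComp_inf hK]
      exact inf_le_inf (le_N s U) (le_N s V)
    · rw [iSup_inf_iSup]
      refine iSup_le fun p => ?_
      refine le_trans ?_ (le_N (p.1 ++ p.2) (U ⊓ V))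
      rw [iterComp_inf hK]
      exact inf_le_inf (iterComp_le_append_left hK _ _ U)
        (iterComp_le_append_right hK hKs _ _ V)
  · intro D hne hD a ha
    constructor
    · rintro _ ⟨d, hd, rfl⟩
      exact iSup_mono fun s => (scottContinuous_iterComp hKs s).monotone (ha.1 hd)
    · intro b hb
      refine iSup_le fun s => (scottContinuous_iterComp hKs s hne hD ha).2 ?_
      rintro _ ⟨d, hd, rfl⟩
      exact (le_N s d).trans (hb ⟨d, hd, rfl⟩)
  · induction s generalizing U with
    | nil => exact hj.1 U
    | cons i s ih =>
      calc iterComp K s (K i U) ≤ j (K i U) := ih _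
        _ ≤ j (j U) := hjs.monotone (hKj i U)
        _ = j U := hj.2.1 U
end

section
/- Let L be a spectral frame with basis B : I → L of compact elements closed under finite meets and finite joins, and let j and k be Scott continuous nuclei on L. Then j ≤ k pointwise if and only if j (B i) ≤ k (B i) for every i : I. -/
/-!
Every `U` is the supremum of the basic elements below it, and closure under finite joins makes this
family directed. Scott continuity of `j` therefore writes `j U` as the supremum of the `j (B i)` with
`B i ≤ U`, and each of these is at most `k (B i) ≤ k U` by monotonicity of `k`.
-/

universe u v w

theorem nuclei_basic_order {I : Type*} {L : Type*} [Order.Frame L] (B : I → L)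
    (hbasis : IsBasis B)
    (hcomp : ∀ i, WayBelow (B i) (B i))
    (htop : ∃ t, B t = ⊤) (hmeet : ∀ i j, ∃ k, B k = B i ⊓ B j)
    (hbot : ∃ b, B b = ⊥) (hjoin : ∀ i j, ∃ k, B k = B i ⊔ B j)
    (j k : L → L) (hj : IsNucleus j) (hk : IsNucleus k)
    (hjs : ScottContinuous j) (hks : ScottContinuous k) :
    (∀ U, j U ≤ k U) ↔ ∀ i, j (B i) ≤ k (B i) := by
  refine ⟨fun h i => h (B i), fun h U => ?_⟩
  -- The basic elements below `U` form a nonempty directed family with supremum `U`.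
  have hne : {x | ∃ i, B i = x ∧ x ≤ U}.Nonempty := by
    obtain ⟨b, hb⟩ := hbot
    exact ⟨⊥, b, hb, bot_le⟩
  have hdir : DirectedOn (· ≤ ·) {x | ∃ i, B i = x ∧ x ≤ U} := by
    rintro _ ⟨a, rfl, ha⟩ _ ⟨b, rfl, hb⟩
    obtain ⟨c, hc⟩ := hjoin a b
    exact ⟨B a ⊔ B b, ⟨c, hc, sup_le ha hb⟩, le_sup_left, le_sup_right⟩
  have hlub : IsLUB {x | ∃ i, B i = x ∧ x ≤ U} U := by
    refine ⟨fun x hx => hx.choose_spec.2, fun y hy => ?_⟩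
    obtain ⟨J, hJ⟩ := hbasis U
    have hle : ⨆ i ∈ J, B i ≤ y :=
      iSup₂_le fun i hi => hy ⟨i, rfl, (le_iSup₂ (f := fun i _ => B i) i hi).trans hJ.ge⟩
    exact hJ.le.trans hle
  refine (hjs hne hdir hlub).2 ?_
  rintro _ ⟨_, ⟨i, rfl, hi⟩, rfl⟩
  exact (h i).trans (hks.monotone hi)
end

section
/- Let L be a frame. (1) For any U : L, the closed nucleus V ↦ U ⊔ V is Scott continuous. (2) If L is a spectral frame with basis B : I → L of compact elements closed under finite meets and finite joins and C : L is compact, then the open nucleus V ↦ C ⇨ V (Heyting implication) is Scott continuous. -/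
/-!
Joining with a fixed element preserves all nonempty suprema, so closed nuclei are Scott continuous.

For the open nucleus of a compact `C`, let `a` be the supremum of a directed set `d`. Since `C ⇨ a`
is a supremum of basic elements, it suffices to bound each basic `B j ≤ C ⇨ a`. A compact element
is itself basic (`exists_basis_eq_of_wayBelow_self`), so `B j ⊓ C` is basic and hence compact; as it
lies below `a`, it lies below some `x ∈ d`, i.e. `B j ≤ C ⇨ x`.
-/

universe u v w

/-- Compact elements belong to every basis closed under finite joins: the basic elements below `C`
form a directed set with supremum `C`. -/
lemma exists_basis_eq_of_wayBelow_self {I L : Type*} [Order.Frame L] {B : I → L}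
    (hB : IsBasis B) (hbot : ∃ b, B b = ⊥) (hsup : ∀ i j, ∃ k, B k = B i ⊔ B j)
    {C : L} (hC : WayBelow C C) : ∃ i, B i = C := by
  suffices h : ∃ x ∈ {x | (∃ i, B i = x) ∧ x ≤ C}, C ≤ x by
    obtain ⟨_, ⟨⟨i, rfl⟩, hiC⟩, hCi⟩ := h
    exact ⟨i, le_antisymm hiC hCi⟩
  refine hC _ ?_ ?_ ?_
  · exact ⟨⊥, hbot, bot_le⟩
  · rintro _ ⟨⟨i, rfl⟩, hi⟩ _ ⟨⟨j, rfl⟩, hj⟩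
    exact ⟨B i ⊔ B j, ⟨hsup i j, sup_le hi hj⟩, le_sup_left, le_sup_right⟩
  · obtain ⟨J, hJ⟩ := hB C
    have hle : ∀ j ∈ J, B j ≤ C := fun j hj => hJ ▸ le_iSup₂ (f := fun j _ => B j) j hj
    exact hJ.trans_le (iSup₂_le fun j hj => le_sSup ⟨⟨j, rfl⟩, hle j hj⟩)

theorem closed_open_nuclei_scottContinuous {I : Type*} {L : Type*} [Order.Frame L] :
    (∀ U : L, ScottContinuous (fun V => U ⊔ V)) ∧
    (∀ B : I → L, IsBasis B → (∀ i, WayBelow (B i) (B i)) →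
      (∃ t, B t = ⊤) → (∀ i j, ∃ k, B k = B i ⊓ B j) →
      (∃ b, B b = ⊥) → (∀ i j, ∃ k, B k = B i ⊔ B j) →
      ∀ C : L, WayBelow C C → ScottContinuous (fun V => C ⇨ V)) := by
  refine ⟨fun U d hd _ a ha => ⟨?_, fun y hy => ?_⟩,
    fun B hB hcpt _ hinf hbot hsup C hC d hd hdir a ha => ⟨?_, fun y hy => ?_⟩⟩
  · rintro _ ⟨x, hx, rfl⟩
    exact sup_le_sup_left (ha.1 hx) U
  -- Nonemptiness of `d` is what gives `U ≤ y`.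
  · obtain ⟨x₀, hx₀⟩ := hd
    exact sup_le (le_sup_left.trans (hy ⟨x₀, hx₀, rfl⟩))
      (ha.2 fun x hx => le_sup_right.trans (hy ⟨x, hx, rfl⟩))
  · rintro _ ⟨x, hx, rfl⟩
    exact himp_le_himp_left (ha.1 hx)
  · obtain ⟨i, rfl⟩ := exists_basis_eq_of_wayBelow_self hB hbot hsup hC
    obtain ⟨J, hJ⟩ := hB (B i ⇨ a)
    have hle : ∀ j ∈ J, B j ≤ B i ⇨ a := fun j hj =>
      hJ ▸ le_iSup₂ (f := fun j _ => B j) j hj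
    change B i ⇨ a ≤ y
    rw [hJ]
    refine iSup₂_le fun j hj => ?_
    obtain ⟨k, hk⟩ := hinf j i
    obtain ⟨x, hx, hkx⟩ := hcpt k d hd hdir
      (by rw [hk, ha.sSup_eq]; exact le_himp_iff.1 (hle j hj))
    exact (le_himp_iff.2 (hk ▸ hkx)).trans (hy ⟨x, hx, rfl⟩)
end

section
/- Let K : I → (L → L) be a family of Scott continuous nuclei on a frame L that is directed in the pointwise order. Then the pointwise supremum U ↦ ⨆ (i : I), K i U is a Scott continuous nucleus on L and is the least upper bound of the family among Scott continuous nuclei; in particular, the join of a directed family of Scott continuous nuclei is computed pointwise. -/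
/-!
The only delicate points are idempotence and preservation of binary meets of the pointwise
supremum. For idempotence, the family `i ↦ K i U` is directed, so Scott continuity gives
`K i (⨆ j, K j U) = ⨆ j, K i (K j U)`; if `K k` bounds both `K i` and `K j`, then
`K i (K j U) ≤ K k (K k U) = K k U`. For meets, frame distributivity reduces the claim to
`K i U ⊓ K j V ≤ K k U ⊓ K k V = K k (U ⊓ V)`. Scott continuity holds because suprema commute
with suprema.
-/

universe u v w

theorem directed_join_pointwise {I : Type*} {L : Type*} [Order.Frame L]
    (K : I → L → L)
    (hK : ∀ i, IsNucleus (K i)) (hKs : ∀ i, ScottContinuous (K i))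
    (hne : Nonempty I)
    (hdir : ∀ i j : I, ∃ k : I, (∀ U, K i U ≤ K k U) ∧ (∀ U, K j U ≤ K k U)) :
    IsNucleus (fun U => ⨆ i, K i U) ∧
    ScottContinuous (fun U => ⨆ i, K i U) ∧
    (∀ i U, K i U ≤ ⨆ i', K i' U) ∧
    (∀ j : L → L, IsNucleus j → ScottContinuous j → (∀ i U, K i U ≤ j U) →
      ∀ U, (⨆ i, K i U) ≤ j U) := by
  have hmono : ∀ i, Monotone (K i) := fun i => (hKs i).monotone
  refine ⟨⟨?_, ?_, ?_⟩, ?_, fun i U => le_iSup (fun i => K i U) i,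
    fun j _ _ hj U => iSup_le fun i => hj i U⟩
  · intro U
    obtain ⟨i⟩ := hne
    exact ((hK i).1 U).trans (le_iSup (fun i => K i U) i)
  · intro U
    apply le_antisymm
    · refine iSup_le fun i => ?_
      have hd : DirectedOn (· ≤ ·) (Set.range fun j => K j U) := by
        rintro _ ⟨a, rfl⟩ _ ⟨b, rfl⟩
        obtain ⟨k, hak, hbk⟩ := hdir a b
        exact ⟨_, ⟨k, rfl⟩, hak U, hbk U⟩
      have hlub := hKs i (Set.range_nonempty _) hd (isLUB_iSup (f := fun j => K j U))
      refine hlub.2 ?_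
      rintro _ ⟨_, ⟨j, rfl⟩, rfl⟩
      obtain ⟨k, hik, hjk⟩ := hdir i j
      calc K i (K j U) ≤ K k (K j U) := hik _
        _ ≤ K k (K k U) := hmono k (hjk U)
        _ = K k U := (hK k).2.1 U
        _ ≤ ⨆ i, K i U := le_iSup (fun i => K i U) k
    · exact iSup_mono fun i => hmono i (((hK i).1 U).trans (le_iSup (fun i => K i U) i))
  · intro U V
    apply le_antisymm
    · exact le_inf (iSup_mono fun i => hmono i inf_le_left)
        (iSup_mono fun i => hmono i inf_le_right)
    · simp only [iSup_inf_iSup]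
      refine iSup_le fun ⟨i, j⟩ => ?_
      obtain ⟨k, hik, hjk⟩ := hdir i j
      calc K i U ⊓ K j V ≤ K k U ⊓ K k V := inf_le_inf (hik U) (hjk V)
        _ = K k (U ⊓ V) := ((hK k).2.2 U V).symm
        _ ≤ ⨆ i, K i (U ⊓ V) := le_iSup (fun i => K i (U ⊓ V)) k
  · intro D hD hdD a ha
    constructor
    · rintro _ ⟨d, hd, rfl⟩
      exact iSup_mono fun i => hmono i (ha.1 hd)
    · intro b hb
      refine iSup_le fun i => (hKs i hD hdD ha).2 ?_
      rintro _ ⟨d, hd, rfl⟩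
      exact (le_iSup (fun i => K i d) i).trans (hb ⟨d, hd, rfl⟩)
end

section
/- Let L be a spectral frame with basis B : I → L of compact elements closed under finite meets and finite joins, and let j be a Scott continuous nucleus on L. Then j is the supremum, in the complete lattice of nuclei on L, of the family n ↦ (c (j (B n))) ⊓ (o (B n)), where c U is the closed nucleus V ↦ U ⊔ V and o U is the open nucleus V ↦ U ⇨ V. -/
/-!
For the upper bound, distributivity reduces the claim to `j (B n) ⊓ (B n ⇨ V) ≤ j V`, which is
modus ponens under `j`, since `j` is inflationary and preserves binary meets.

For leastness, let `k` be an upper bound. If `B n ≤ V` then `B n ⇨ V = ⊤`, so the hypothesis on `k`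
gives `j (B n) ≤ k V`. As `B` is a basis closed under finite joins, `V` is the directed supremum
of the basic elements below it, and Scott continuity of `j` yields `j V ≤ k V`.
-/

universe u v w

theorem johnstone_decomposition {I : Type*} {L : Type*} [Order.Frame L] (B : I → L)
    (hbasis : IsBasis B)
    (hcomp : ∀ i, WayBelow (B i) (B i))
    (htop : ∃ t, B t = ⊤) (hmeet : ∀ i j, ∃ k, B k = B i ⊓ B j)
    (hbot : ∃ b, B b = ⊥) (hjoin : ∀ i j, ∃ k, B k = B i ⊔ B j)
    (j : L → L) (hj : IsNucleus j) (hjs : ScottContinuous j) :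
    (∀ (n : I) (V : L), (j (B n) ⊔ V) ⊓ (B n ⇨ V) ≤ j V) ∧
    (∀ k : L → L, IsNucleus k →
      (∀ (n : I) (V : L), (j (B n) ⊔ V) ⊓ (B n ⇨ V) ≤ k V) →
      ∀ V, j V ≤ k V) := by
  obtain ⟨hinfl, -, hinf⟩ := hj
  have hmono : Monotone j := hjs.monotone
  refine ⟨fun n V => ?_, fun k _ hk V => ?_⟩
  · rw [inf_sup_right]
    refine sup_le ?_ (inf_le_left.trans (hinfl V))
    calc j (B n) ⊓ (B n ⇨ V) ≤ j (B n) ⊓ j (B n ⇨ V) := inf_le_inf_left _ (hinfl _)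
      _ = j (B n ⊓ (B n ⇨ V)) := (hinf _ _).symm
      _ ≤ j V := hmono inf_himp_le
  · have hne : {x | ∃ n, B n = x ∧ B n ≤ V}.Nonempty := by
      obtain ⟨b, hb⟩ := hbot
      exact ⟨B b, b, rfl, hb ▸ bot_le⟩
    have hdir : DirectedOn (· ≤ ·) {x | ∃ n, B n = x ∧ B n ≤ V} := by
      rintro _ ⟨m, rfl, hm⟩ _ ⟨n, rfl, hn⟩
      obtain ⟨l, hl⟩ := hjoin m n
      exact ⟨B l, ⟨l, rfl, hl ▸ sup_le hm hn⟩, hl ▸ le_sup_left, hl ▸ le_sup_right⟩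
    have hlub : IsLUB {x | ∃ n, B n = x ∧ B n ≤ V} V := by
      refine ⟨?_, fun W hW => ?_⟩
      · rintro _ ⟨n, rfl, hn⟩
        exact hn
      · obtain ⟨J, hJ⟩ := hbasis V
        have hle : ∀ n ∈ J, B n ≤ V := fun n hn => (le_iSup₂ n hn).trans hJ.ge
        rw [hJ]
        exact iSup₂_le fun n hn => hW ⟨n, rfl, hle n hn⟩
    refine (hjs hne hdir hlub).2 ?_
    rintro _ ⟨_, ⟨n, rfl, hn⟩, rfl⟩
    refine le_trans ?_ (hk n V)
    rw [himp_eq_top_iff.2 hn, inf_top_eq]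
    exact le_sup_left
end

section
/- Let L and L' be frames with L spectral, let B be a Boolean algebra, and let η : B → L be an injective bounded lattice homomorphism (preserving ⊥, ⊤, finite meets and finite joins) such that (1) every element of L is a supremum of elements of the image of η, and (2) every compact element of L lies in the image of η. Then for every bounded lattice homomorphism h : B → L' there exists a unique frame homomorphism h̄ : L → L' (preserving ⊤, binary meets, and arbitrary suprema) with h = h̄ ∘ η; moreover h̄ is given by h̄ x = ⨆ {h b | b : B, η b ≤ x}. -/
/-!
The top element of a spectral frame is compact, and a complemented element of a frame whose top is
compact is itself compact (`wayBelow_self_of_compl`). Hence every `η b` is compact. This gives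
preservation of suprema: given `T = sSup (extFun η h '' S)`, the elements `η c` with `h c ≤ T` form
a directed family whose supremum dominates `sSup S`, so `η b ≤ sSup S` forces `η b ≤ η c` for one
such `c`; as `η` is an order embedding, `h b ≤ h c ≤ T`. Preservation of binary meets is frame
distributivity, and uniqueness holds because the image of `η` generates `L` under suprema.
-/

universe u v w

def extFun {B : Type*} {L : Type*} {L' : Type*} [Order.Frame L] [Order.Frame L']
    (η : B → L) (h : B → L') : L → L' :=
  fun x => sSup (h '' {b : B | η b ≤ x})

/-- In a spectral frame the top element is a basis element, hence compact. -/
theorem IsSpectral.wayBelow_top {L : Type u} [Order.Frame L] (hL : IsSpectral L) :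
    WayBelow (⊤ : L) ⊤ := by
  obtain ⟨I, B, -, hc, ⟨⟨t, ht⟩, -⟩, -⟩ := hL
  exact ht ▸ hc t

theorem wayBelow_self_of_compl {L : Type*} [Order.Frame L] (htop : WayBelow (⊤ : L) ⊤)
    {u w : L} (huw : IsCompl u w) : WayBelow u u := by
  intro D hne hdir hle
  -- Compactness of `⊤` applies to the directed family `{d ⊔ w | d ∈ D}`.
  obtain ⟨_, ⟨d, hd, rfl⟩, hle'⟩ := htop ((· ⊔ w) '' D) (hne.image _) (by
    rintro _ ⟨a, ha, rfl⟩ _ ⟨b, hb, rfl⟩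
    obtain ⟨c, hc, hac, hbc⟩ := hdir a ha b hb
    exact ⟨_, ⟨c, hc, rfl⟩, sup_le_sup_right hac w, sup_le_sup_right hbc w⟩) (by
    rw [← huw.sup_eq_top]
    obtain ⟨d₀, hd₀⟩ := hne
    refine sup_le (hle.trans (sSup_le fun d hd => ?_)) ?_
    · exact le_sup_left.trans (le_sSup ⟨d, hd, rfl⟩)
    · exact le_sup_right.trans (le_sSup ⟨d₀, hd₀, rfl⟩))
  exact ⟨d, hd, Disjoint.left_le_of_le_sup_right (le_top.trans hle') huw.disjoint⟩

theorem extension_lemma {L : Type u} {L' : Type v} {B : Type w}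
    [Order.Frame L] [Order.Frame L'] [BooleanAlgebra B]
    (hL : IsSpectral L)
    (η : B → L) (hinj : Function.Injective η)
    (hηbot : η ⊥ = ⊥) (hηtop : η ⊤ = ⊤)
    (hηinf : ∀ a b : B, η (a ⊓ b) = η a ⊓ η b)
    (hηsup : ∀ a b : B, η (a ⊔ b) = η a ⊔ η b)
    (hgen : ∀ x : L, ∃ S : Set B, x = ⨆ b ∈ S, η b)
    (hcompact : ∀ C : L, WayBelow C C → ∃ b : B, η b = C)
    (h : B → L')
    (hbot : h ⊥ = ⊥) (htop : h ⊤ = ⊤)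
    (hinf : ∀ a b : B, h (a ⊓ b) = h a ⊓ h b)
    (hsup : ∀ a b : B, h (a ⊔ b) = h a ⊔ h b) :
    (extFun η h ⊤ = ⊤ ∧
     (∀ x y : L, extFun η h (x ⊓ y) = extFun η h x ⊓ extFun η h y) ∧
     (∀ S : Set L, extFun η h (sSup S) = sSup (extFun η h '' S)) ∧
     (∀ b : B, extFun η h (η b) = h b)) ∧
    (∀ f : L → L', f ⊤ = ⊤ → (∀ x y : L, f (x ⊓ y) = f x ⊓ f y) →
      (∀ S : Set L, f (sSup S) = sSup (f '' S)) → (∀ b : B, f (η b) = h b) →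
      f = extFun η h) := by
  have hmono : Monotone h := fun a b hab => by
    rw [← inf_eq_left.mpr hab, hinf]; exact inf_le_right
  have hηmono : Monotone η := fun a b hab => by
    rw [← inf_eq_left.mpr hab, hηinf]; exact inf_le_right
  have hηle : ∀ {a b : B}, η a ≤ η b → a ≤ b := fun {a b} hab =>
    inf_eq_left.mp (hinj (by rw [hηinf, inf_eq_left.mpr hab]))
  have hcpt : ∀ b : B, WayBelow (η b) (η b) := fun b =>
    wayBelow_self_of_compl hL.wayBelow_top (w := η bᶜ) <| IsCompl.of_eq
      (by rw [← hηinf, inf_compl_self, hηbot]) (by rw [← hηsup, sup_compl_eq_top, hηtop])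
  have hle_ext : ∀ {b : B} {x : L}, η b ≤ x → h b ≤ extFun η h x := fun {b x} hb =>
    le_sSup ⟨b, hb, rfl⟩
  have hext_le : ∀ {x : L} {t : L'}, (∀ b, η b ≤ x → h b ≤ t) → extFun η h x ≤ t := by
    rintro x t ht
    refine sSup_le ?_
    rintro _ ⟨b, hb, rfl⟩
    exact ht b hb
  have hextmono : Monotone (extFun η h) := fun x y hxy =>
    hext_le fun b hb => hle_ext (hb.trans hxy)
  have hgen' : ∀ x : L, sSup (η '' {b | η b ≤ x}) = x := by
    intro x
    apply le_antisymm
    · refine sSup_le ?_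
      rintro _ ⟨b, hb, rfl⟩
      exact hb
    · obtain ⟨S, hS⟩ := hgen x
      have hSle : ∀ b ∈ S, η b ≤ x := fun b hb => by
        rw [hS]; exact le_iSup₂ (f := fun b (_ : b ∈ S) => η b) b hb
      calc x = ⨆ b ∈ S, η b := hS
        _ ≤ sSup (η '' {b | η b ≤ x}) := iSup₂_le fun b hb => le_sSup ⟨b, hSle b hb, rfl⟩
  refine ⟨⟨?_, ?_, ?_, ?_⟩, ?_⟩
  · exact top_le_iff.mp (htop ▸ hle_ext le_top)
  · intro x y
    refine le_antisymm (hextmono.map_inf_le x y) ?_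
    change sSup _ ⊓ sSup _ ≤ _
    rw [sSup_inf_sSup]
    refine iSup₂_le ?_
    rintro ⟨_, _⟩ ⟨⟨a, ha, rfl⟩, ⟨b, hb, rfl⟩⟩
    change h a ⊓ h b ≤ _
    rw [← hinf]
    exact hle_ext (by rw [hηinf]; exact inf_le_inf ha hb)
  · intro S
    apply le_antisymm
    · refine hext_le fun b hb => ?_
      set T := sSup (extFun η h '' S)
      obtain ⟨_, ⟨c, hc, rfl⟩, hbc⟩ := hcpt b (η '' {c | h c ≤ T})
        ⟨_, ⊥, by simp [hbot], rfl⟩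
        (by
          rintro _ ⟨a, ha, rfl⟩ _ ⟨c, hc, rfl⟩
          exact ⟨_, ⟨a ⊔ c, (hsup a c).le.trans (sup_le ha hc), rfl⟩,
            hηmono le_sup_left, hηmono le_sup_right⟩)
        (by
          refine hb.trans (sSup_le fun x hx => ?_)
          rw [← hgen' x]
          refine sSup_le_sSup (Set.image_mono fun c hc => ?_)
          exact (hle_ext hc).trans (le_sSup ⟨x, hx, rfl⟩))
      exact (hmono (hηle hbc)).trans hc
    · refine sSup_le ?_
      rintro _ ⟨x, hx, rfl⟩
      exact hextmono (le_sSup hx)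
  · exact fun b => le_antisymm (hext_le fun a ha => hmono (hηle ha)) (hle_ext le_rfl)
  · intro f _ _ hfsup hfη
    funext x
    conv_lhs => rw [← hgen' x, hfsup, Set.image_image]
    simp only [hfη]
    rfl
end
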